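/- arXiv:1209.1192 — 3 statements merged into one kernel-verified Lean document; each statement's English description precedes it below -/
import Mathlib

section
/- (Lemma 1.) Let μ, κ > −1 be real, n ∈ ℕ, α ≥ 0 real, and l ∈ ℕ with l ≥ 1 and l−1 ≤ α < l. Then for every t ∈ (0,1], the Riemann–Liouville fractional derivative of order α of the Jacobi polynomial P_n^{(μ,κ)} at t equals Σ_{j=0}^{n} Σ_{m=0}^{n−j} c_{μ,κ,n,j,m} · (Γ(n−m+1)/Γ(n−m+1−α)) · t^{n−m−α}, where c_{μ,κ,n,j,m} = (−1)^m · C(n+μ, j) · C(n+κ, n−j) · C(n−j, m). -/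
/-- Generalized binomial coefficient `C(x, k) = Γ(x+1)/(Γ(k+1)·Γ(x−k+1))`. -/
noncomputable def genBinom (x : ℝ) (k : ℕ) : ℝ :=
  Real.Gamma (x + 1) / (Real.Gamma ((k : ℝ) + 1) * Real.Gamma (x - (k : ℝ) + 1))

/-- The `n`-th Jacobi orthogonal polynomial on `[0,1]`. -/
noncomputable def jacobiP (μ κ : ℝ) (n : ℕ) (t : ℝ) : ℝ :=
  ∑ j ∈ Finset.range (n + 1),
    genBinom ((n : ℝ) + μ) j * genBinom ((n : ℝ) + κ) (n - j) * (t - 1) ^ (n - j) * t ^ j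

/-- The Riemann–Liouville fractional derivative of order `α` (with `l - 1 ≤ α < l`)
of `f` at `x`. -/
noncomputable def rlDeriv (α : ℝ) (l : ℕ) (f : ℝ → ℝ) (x : ℝ) : ℝ :=
  (1 / Real.Gamma ((l : ℝ) - α)) *
    iteratedDeriv l (fun u => ∫ τ in (0:ℝ)..u, (u - τ) ^ ((l : ℝ) - α - 1) * f τ) x

theorem aux_inv_Gamma (s : ℝ) : (Real.Gamma s)⁻¹ = s * (Real.Gamma (s + 1))⁻¹ := by
  have h := Complex.one_div_Gamma_eq_self_mul_one_div_Gamma_add_one (s : ℂ)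
  rw [← Complex.ofReal_one, ← Complex.ofReal_add, Complex.Gamma_ofReal, Complex.Gamma_ofReal] at h
  exact_mod_cast h

theorem aux_deriv {ι : Type*} (S : Finset ι) (d p : ι → ℝ) (F : ℝ → ℝ)
    (hF : ∀ u : ℝ, 0 < u → F u = ∑ i ∈ S, d i * (Real.Gamma (p i + 1))⁻¹ * u ^ p i) (j : ℕ) :
    ∀ u : ℝ, 0 < u → iteratedDeriv j F u =
      ∑ i ∈ S, d i * (Real.Gamma (p i - j + 1))⁻¹ * u ^ (p i - j) := by
  induction j with
  | zero => intro u hu; simpa using hF u hu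
  | succ j ih =>
    intro u hu
    rw [iteratedDeriv_succ]
    have he : iteratedDeriv j F =ᶠ[nhds u]
        fun u => ∑ i ∈ S, d i * (Real.Gamma (p i - j + 1))⁻¹ * u ^ (p i - j) := by
      filter_upwards [lt_mem_nhds hu] with v hv using ih v hv
    rw [he.deriv_eq]
    have hd : HasDerivAt (fun u => ∑ i ∈ S, d i * (Real.Gamma (p i - j + 1))⁻¹ * u ^ (p i - j))
        (∑ i ∈ S, d i * (Real.Gamma (p i - j + 1))⁻¹ * ((p i - j) * u ^ (p i - j - 1))) u := by
      apply HasDerivAt.fun_sum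
      intro i _
      exact (Real.hasDerivAt_rpow_const (Or.inl hu.ne')).const_mul _
    rw [hd.deriv]
    refine Finset.sum_congr rfl fun i _ => ?_
    have e : p i - ((j + 1 : ℕ) : ℝ) + 1 = p i - j := by push_cast; ring
    have e2 : p i - ((j + 1 : ℕ) : ℝ) = p i - j - 1 := by push_cast; ring
    rw [e, e2, aux_inv_Gamma (p i - j)]
    ring

theorem aux_int (β : ℝ) (hβ : 0 < β) (k : ℕ) (u : ℝ) (hu : 0 < u) :
    ∫ τ in (0:ℝ)..u, (u - τ) ^ (β - 1) * τ ^ k =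
      Real.Gamma β * Real.Gamma ((k : ℝ) + 1) * (Real.Gamma ((k : ℝ) + β + 1))⁻¹
        * u ^ ((k : ℝ) + β) := by
  have h := Complex.betaIntegral_scaled ((k : ℂ) + 1) (β : ℂ) hu
  rw [Complex.betaIntegral_eq_Gamma_mul_div _ _ (by simp; positivity) (by simpa using hβ)] at h
  have e1 : ((k : ℂ) + 1) = (((k : ℝ) + 1 : ℝ) : ℂ) := by push_cast; rfl
  have e2 : ((k : ℂ) + 1 + β) = (((k : ℝ) + β + 1 : ℝ) : ℂ) := by push_cast; ring
  have e3 : ((k : ℂ) + 1 + β - 1) = (((k : ℝ) + β : ℝ) : ℂ) := by push_cast; ring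
  rw [e3, e2, e1, Complex.Gamma_ofReal, Complex.Gamma_ofReal, Complex.Gamma_ofReal,
    ← Complex.ofReal_cpow hu.le] at h
  have h2 : (∫ τ in (0:ℝ)..u, (τ : ℂ) ^ ((((k : ℝ) + 1 : ℝ) : ℂ) - 1)
      * ((u : ℂ) - τ) ^ ((β : ℂ) - 1)) =
      ((∫ τ in (0:ℝ)..u, (u - τ) ^ (β - 1) * τ ^ k : ℝ) : ℂ) := by
    rw [← intervalIntegral.integral_ofReal]
    apply intervalIntegral.integral_congr
    intro τ hτ
    rw [Set.uIcc_of_le hu.le] at hτ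
    have : ((((k : ℝ) + 1 : ℝ) : ℂ) - 1) = (k : ℂ) := by push_cast; ring
    simp only [this, Complex.cpow_natCast]
    push_cast
    rw [Complex.ofReal_cpow (by linarith [hτ.2])]
    push_cast
    ring
  rw [h2] at h
  have h3 := Complex.ofReal_injective (h.trans (by push_cast; rfl : _ =
    ((u ^ ((k : ℝ) + β) * (Real.Gamma ((k : ℝ) + 1) * Real.Gamma β
      / Real.Gamma ((k : ℝ) + β + 1)) : ℝ) : ℂ)))
  rw [h3]; ring

theorem aux_integrable (β : ℝ) (hβ : 0 < β) (k : ℕ) (u : ℝ) :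
    IntervalIntegrable (fun τ => (u - τ) ^ (β - 1) * τ ^ k) MeasureTheory.volume 0 u := by
  have h : IntervalIntegrable (fun τ : ℝ => τ ^ (β - 1)) MeasureTheory.volume 0 u :=
    intervalIntegral.intervalIntegrable_rpow' (by linarith)
  have h2 := (h.comp_sub_left u).symm
  simp only [sub_zero, sub_self] at h2
  exact h2.mul_continuousOn (by fun_prop)

theorem aux_jacobi (μ κ : ℝ) (n : ℕ) (t : ℝ) :
    jacobiP μ κ n t = ∑ j ∈ Finset.range (n + 1), ∑ m ∈ Finset.range (n - j + 1),
        ((-1 : ℝ) ^ m * genBinom ((n : ℝ) + μ) j * genBinom ((n : ℝ) + κ) (n - j) *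
            ((n - j).choose m : ℝ)) * t ^ (n - m) := by
  unfold jacobiP
  refine Finset.sum_congr rfl fun j hj => ?_
  rw [show t - 1 = -1 + t by ring, add_pow, Finset.mul_sum, Finset.sum_mul]
  refine Finset.sum_congr rfl fun m hm => ?_
  rw [Finset.mem_range] at hj hm
  rw [show n - m = (n - j - m) + j by omega, pow_add]
  ring

theorem stmt3 (μ κ : ℝ) (hμ : -1 < μ) (hκ : -1 < κ) (n : ℕ)
    (α : ℝ) (hα : 0 ≤ α) (l : ℕ) (hl : 1 ≤ l) (hα1 : (l : ℝ) - 1 ≤ α) (hα2 : α < l)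
    (t : ℝ) (ht : t ∈ Set.Ioc (0:ℝ) 1) :
    rlDeriv α l (jacobiP μ κ n) t =
      ∑ j ∈ Finset.range (n + 1), ∑ m ∈ Finset.range (n - j + 1),
        ((-1 : ℝ) ^ m * genBinom ((n : ℝ) + μ) j * genBinom ((n : ℝ) + κ) (n - j) *
            ((n - j).choose m : ℝ)) *
          (Real.Gamma ((n : ℝ) - (m : ℝ) + 1) / Real.Gamma ((n : ℝ) - (m : ℝ) + 1 - α)) *
          t ^ ((n : ℝ) - (m : ℝ) - α) := by
  have hβ : 0 < (l : ℝ) - α := by linarith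
  have hG : Real.Gamma ((l : ℝ) - α) ≠ 0 := (Real.Gamma_pos_of_pos hβ).ne'
  set S : Finset (Σ _ : ℕ, ℕ) :=
    (Finset.range (n + 1)).sigma fun j => Finset.range (n - j + 1) with hS
  let c : (Σ _ : ℕ, ℕ) → ℝ := fun x => (-1 : ℝ) ^ x.2 * genBinom ((n : ℝ) + μ) x.1 *
    genBinom ((n : ℝ) + κ) (n - x.1) * ((n - x.1).choose x.2 : ℝ)
  have hJ : ∀ τ, jacobiP μ κ n τ = ∑ x ∈ S, c x * τ ^ (n - x.2) := by
    intro τ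
    rw [aux_jacobi, hS, Finset.sum_sigma]
  have hF := aux_deriv S
    (fun x => c x * (Real.Gamma ((l : ℝ) - α) * Real.Gamma (((n - x.2 : ℕ) : ℝ) + 1)))
    (fun x => ((n - x.2 : ℕ) : ℝ) + ((l : ℝ) - α))
    (fun u => ∫ τ in (0:ℝ)..u, (u - τ) ^ ((l : ℝ) - α - 1) * jacobiP μ κ n τ)
    (by
      intro u hu
      have e : ∀ τ : ℝ, (u - τ) ^ ((l : ℝ) - α - 1) * jacobiP μ κ n τ =
          ∑ x ∈ S, c x * ((u - τ) ^ ((l : ℝ) - α - 1) * τ ^ (n - x.2)) := by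
        intro τ
        rw [hJ, Finset.mul_sum]
        exact Finset.sum_congr rfl fun x _ => by ring
      simp only [e]
      rw [intervalIntegral.integral_finsetSum
        fun x _ => (aux_integrable _ hβ _ u).const_mul _]
      refine Finset.sum_congr rfl fun x _ => ?_
      rw [intervalIntegral.integral_const_mul, aux_int _ hβ _ u hu]
      ring) l t ht.1
  unfold rlDeriv
  rw [hF, Finset.mul_sum, hS, Finset.sum_sigma]
  refine Finset.sum_congr rfl fun j hj => Finset.sum_congr rfl fun m hm => ?_
  rw [Finset.mem_range] at hj hm
  have hm' : m ≤ n := by omega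
  simp only [c]
  rw [Nat.cast_sub hm',
    show (n : ℝ) - m + (l - α) - l + 1 = n - m + 1 - α by ring,
    show (n : ℝ) - m + (l - α) - l = n - m - α by ring]
  field_simp
end

section
/- For all real μ, κ > −1 and all m, n ∈ ℕ with m ≠ n, the Jacobi polynomials are orthogonal with respect to the weight w_{μ,κ}: ∫_0^1 (1−t)^μ · t^κ · P_m^{(μ,κ)}(t) · P_n^{(μ,κ)}(t) dt = 0. -/
open MeasureTheory intervalIntegral Polynomial in
lemma jac_beta (μ κ : ℝ) (hμ : -1 < μ) (hκ : -1 < κ) (a b : ℕ) :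
    IntervalIntegrable (fun t : ℝ => (1 - t) ^ μ * t ^ κ * ((t - 1) ^ a * t ^ b)) volume 0 1 ∧
    ∫ t in (0:ℝ)..1, (1 - t) ^ μ * t ^ κ * ((t - 1) ^ a * t ^ b) =
      (-1) ^ a * (Real.Gamma (μ + a + 1) * Real.Gamma (κ + b + 1) /
        Real.Gamma (μ + κ + (a + b : ℕ) + 2)) := by
  have hu : 0 < κ + b + 1 := by have : (0:ℝ) ≤ b := b.cast_nonneg; linarith
  have hv : 0 < μ + a + 1 := by have : (0:ℝ) ≤ a := a.cast_nonneg; linarith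
  have hu' : 0 < Complex.re ((κ + b + 1 : ℝ) : ℂ) := by simpa using hu
  have hv' : 0 < Complex.re ((μ + a + 1 : ℝ) : ℂ) := by simpa using hv
  have key : Set.EqOn (fun t : ℝ => (t : ℂ) ^ (((κ + b + 1 : ℝ) : ℂ) - 1) *
      (1 - (t : ℂ)) ^ (((μ + a + 1 : ℝ) : ℂ) - 1))
      (fun t : ℝ => (((-1) ^ a * ((1 - t) ^ μ * t ^ κ * ((t - 1) ^ a * t ^ b)) : ℝ) : ℂ))
      (Set.uIoo 0 1) := by
    intro t ht
    rw [Set.uIoo_of_le zero_le_one] at ht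
    obtain ⟨h0, h1⟩ := ht
    have h1' : 0 < 1 - t := by linarith
    have e1 : (t : ℂ) ^ (((κ + b + 1 : ℝ) : ℂ) - 1) = ((t ^ κ * t ^ b : ℝ) : ℂ) := by
      rw [← Real.rpow_add_natCast h0.ne', Complex.ofReal_cpow h0.le]; congr 1; push_cast; ring
    have e2 : (1 - (t : ℂ)) ^ (((μ + a + 1 : ℝ) : ℂ) - 1) =
        (((1 - t) ^ μ * (1 - t) ^ a : ℝ) : ℂ) := by
      rw [← Real.rpow_add_natCast h1'.ne', Complex.ofReal_cpow h1'.le]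
      congr 1 <;> push_cast <;> ring
    have e3 : (1 - t) ^ a = (-1) ^ a * (t - 1) ^ a := by rw [← mul_pow]; ring
    simp only []
    rw [e1, e2, e3, ← Complex.ofReal_mul]
    congr 1; ring
  have hint := Complex.betaIntegral_convergent hu' hv'
  have hval := Complex.betaIntegral_eq_Gamma_mul_div _ _ hu' hv'
  rw [Complex.betaIntegral, integral_congr_uIoo key, intervalIntegral.integral_ofReal,
    Complex.Gamma_ofReal, Complex.Gamma_ofReal, ← Complex.ofReal_add, Complex.Gamma_ofReal,
    ← Complex.ofReal_mul, ← Complex.ofReal_div, Complex.ofReal_inj,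
    intervalIntegral.integral_const_mul] at hval
  have hs : ((-1:ℝ) ^ a) * (-1) ^ a = 1 := by rw [← mul_pow]; simp
  constructor
  · have h2 := (hint.congr_uIoo key)
    have h3 : IntervalIntegrable (fun t : ℝ =>
        (-1) ^ a * ((1 - t) ^ μ * t ^ κ * ((t - 1) ^ a * t ^ b))) volume 0 1 := by
      constructor
      · exact h2.1.re
      · simp
    have h4 := h3.const_mul ((-1) ^ a)
    refine h4.congr_uIoo ?_
    intro t _
    simp only [← mul_assoc, hs, one_mul]
  · have := congrArg (fun x => (-1) ^ a * x) hval
    simp only [← mul_assoc, hs, one_mul] at this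
    simp only [← mul_assoc]
    rw [this]
    have : κ + b + 1 + (μ + a + 1) = μ + κ + (a + b : ℕ) + 2 := by push_cast; ring
    rw [this]; ring

lemma jac_gamma (x : ℝ) (hx : 0 < x) (k : ℕ) :
    Real.Gamma (x + k) = (ascPochhammer ℝ k).eval x * Real.Gamma x := by
  induction k with
  | zero => simp
  | succ k ih =>
    have : x + k ≠ 0 := by positivity
    rw [ascPochhammer_succ_eval, Nat.cast_succ, ← add_assoc, Real.Gamma_add_one this, ih]; ring

open fwdDiff in
lemma jac_sum (x : ℝ) (k n : ℕ) (h : k < n) :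
    ∑ j ∈ Finset.range (n + 1), (-1 : ℝ) ^ (n - j) * n.choose j *
      (ascPochhammer ℝ k).eval (x + j) = 0 := by
  have h1 := congrFun (Polynomial.fwdDiff_iter_eq_zero_of_degree_lt
    (P := ascPochhammer ℝ k) (n := n) (by simpa [ascPochhammer_natDegree] using h)) x
  rw [fwdDiff_iter_eq_sum_shift] at h1
  simpa using h1

lemma jac_coef (μ κ : ℝ) (n j : ℕ) (hj : j ≤ n) :
    genBinom ((n : ℝ) + μ) j * genBinom ((n : ℝ) + κ) (n - j) =
    Real.Gamma (n + μ + 1) * Real.Gamma (n + κ + 1) / n.factorial * n.choose j /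
      (Real.Gamma (μ + (n - j : ℕ) + 1) * Real.Gamma (κ + j + 1)) := by
  unfold genBinom
  rw [Real.Gamma_nat_eq_factorial, Real.Gamma_nat_eq_factorial, Nat.cast_choose ℝ hj,
    Nat.cast_sub hj]
  have e1 : (n:ℝ) + μ - j + 1 = μ + (n - j) + 1 := by ring
  have e2 : (n:ℝ) + κ - (n - j) + 1 = κ + j + 1 := by ring
  rw [e1, e2]
  have := n.factorial_ne_zero
  have := j.factorial_ne_zero
  have := (n-j).factorial_ne_zero
  generalize Real.Gamma (μ + (n - j) + 1) = A
  generalize Real.Gamma (κ + j + 1) = B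
  simp only [div_eq_mul_inv, mul_inv]
  field_simp

open MeasureTheory intervalIntegral in
lemma jac_mono (μ κ : ℝ) (hμ : -1 < μ) (hκ : -1 < κ) (n k : ℕ) :
    IntervalIntegrable (fun t : ℝ => (1 - t) ^ μ * t ^ κ * (t ^ k * jacobiP μ κ n t)) volume 0 1 ∧
    (k < n → ∫ t in (0:ℝ)..1, (1 - t) ^ μ * t ^ κ * (t ^ k * jacobiP μ κ n t) = 0) := by
  have e : (fun t : ℝ => (1 - t) ^ μ * t ^ κ * (t ^ k * jacobiP μ κ n t)) =
      fun t => ∑ j ∈ Finset.range (n + 1),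
        genBinom ((n : ℝ) + μ) j * genBinom ((n : ℝ) + κ) (n - j) *
        ((1 - t) ^ μ * t ^ κ * ((t - 1) ^ (n - j) * t ^ (j + k))) := by
    funext t
    rw [jacobiP, Finset.mul_sum, Finset.mul_sum]
    refine Finset.sum_congr rfl fun j _ => ?_
    rw [pow_add]; ring
  have hI : ∀ j ∈ Finset.range (n + 1), IntervalIntegrable (fun t : ℝ =>
        genBinom ((n : ℝ) + μ) j * genBinom ((n : ℝ) + κ) (n - j) *
        ((1 - t) ^ μ * t ^ κ * ((t - 1) ^ (n - j) * t ^ (j + k)))) volume 0 1 :=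
    fun j _ => (jac_beta μ κ hμ hκ (n - j) (j + k)).1.const_mul _
  rw [e]
  constructor
  · simpa only [Finset.sum_fn] using IntervalIntegrable.sum _ hI
  intro hk
  rw [integral_finsetSum hI]
  have h0 := congrArg (fun x => Real.Gamma (n + μ + 1) * Real.Gamma (n + κ + 1) / n.factorial /
    Real.Gamma (μ + κ + (n + k : ℕ) + 2) * x) (jac_sum (κ + 1) k n hk)
  simp only [mul_zero] at h0
  refine Eq.trans ?_ h0
  rw [Finset.mul_sum]
  refine Finset.sum_congr rfl fun j hj => ?_
  have hj : j ≤ n := by simpa [Nat.lt_succ_iff] using hj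
  rw [intervalIntegral.integral_const_mul, (jac_beta μ κ hμ hκ (n - j) (j + k)).2, jac_coef μ κ n j hj]
  have hx : 0 < κ + j + 1 := by have : (0:ℝ) ≤ j := j.cast_nonneg; linarith
  have hy : 0 < μ + (n - j : ℕ) + 1 := by
    have : (0:ℝ) ≤ (n - j : ℕ) := Nat.cast_nonneg _
    linarith
  have e1 : κ + (j + k : ℕ) + 1 = (κ + j + 1) + k := by push_cast; ring
  have e2 : n - j + (j + k) = n + k := by omega
  have e3 : κ + 1 + j = κ + j + 1 := by ring
  rw [e1, e2, e3, jac_gamma _ hx]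
  have g1 := (Real.Gamma_pos_of_pos hx).ne'
  have g2 := (Real.Gamma_pos_of_pos hy).ne'
  generalize Real.Gamma (μ + κ + (n + k : ℕ) + 2) = G
  generalize Real.Gamma (κ + j + 1) = B at *
  generalize Real.Gamma (μ + (n - j : ℕ) + 1) = A at *
  field_simp

open Polynomial in
lemma jac_poly (μ κ : ℝ) (m : ℕ) : ∃ c : ℕ → ℝ, ∀ t,
    jacobiP μ κ m t = ∑ k ∈ Finset.range (m + 1), c k * t ^ k := by
  let p : ℝ[X] := ∑ j ∈ Finset.range (m + 1),
    C (genBinom ((m : ℝ) + μ) j * genBinom ((m : ℝ) + κ) (m - j)) * ((X - C 1) ^ (m - j) * X ^ j)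
  have hp : p.natDegree ≤ m := by
    refine natDegree_sum_le_of_forall_le _ _ fun j hj => ?_
    have hj : j ≤ m := by simpa [Nat.lt_succ_iff] using hj
    refine (natDegree_C_mul_le _ _).trans (natDegree_mul_le.trans ?_)
    rw [natDegree_pow, natDegree_X_sub_C, natDegree_X_pow]; omega
  refine ⟨p.coeff, fun t => ?_⟩
  rw [← eval_eq_sum_range' (Nat.lt_succ_of_le hp)]
  simp only [p, jacobiP, eval_finsetSum]
  refine Finset.sum_congr rfl fun j _ => ?_
  simp; ring

open MeasureTheory intervalIntegral in
lemma jac_main (μ κ : ℝ) (hμ : -1 < μ) (hκ : -1 < κ) (m n : ℕ) (hmn : m < n) :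
    ∫ t in (0:ℝ)..1, (1 - t) ^ μ * t ^ κ * jacobiP μ κ m t * jacobiP μ κ n t = 0 := by
  obtain ⟨c, hc⟩ := jac_poly μ κ m
  have e : (fun t : ℝ => (1 - t) ^ μ * t ^ κ * jacobiP μ κ m t * jacobiP μ κ n t) =
      fun t => ∑ k ∈ Finset.range (m + 1),
        c k * ((1 - t) ^ μ * t ^ κ * (t ^ k * jacobiP μ κ n t)) := by
    funext t
    rw [hc t, Finset.mul_sum, Finset.sum_mul]
    refine Finset.sum_congr rfl fun j _ => ?_
    ring
  rw [e, integral_finsetSum fun k _ => (jac_mono μ κ hμ hκ n k).1.const_mul _]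
  refine Finset.sum_eq_zero fun k hk => ?_
  have hk : k ≤ m := by simpa [Nat.lt_succ_iff] using hk
  rw [intervalIntegral.integral_const_mul, (jac_mono μ κ hμ hκ n k).2 (by omega), mul_zero]

theorem stmt5 (μ κ : ℝ) (hμ : -1 < μ) (hκ : -1 < κ) (m n : ℕ) (hmn : m ≠ n) :
    ∫ t in (0:ℝ)..1, (1 - t) ^ μ * t ^ κ * jacobiP μ κ m t * jacobiP μ κ n t = 0 := by
  rcases lt_or_gt_of_ne hmn with h | h
  · exact jac_main μ κ hμ hκ m n h
  · refine Eq.trans ?_ (jac_main μ κ hμ hκ n m h)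
    congr 1; funext t; ring
end

section
/- (Proposition: fractional Jacobi differentiator.) Let a < b be reals, h = b−a, let y : ℝ → ℝ be continuous on [a,b], let N ∈ ℕ, μ, κ > −1 real, α ≥ 0 real, and l ∈ ℕ with l ≥ 1 and l−1 ≤ α < l. Define the truncated Jacobi series D^{(0)}(t) = Σ_{i=0}^{N} (⟨P_i^{(μ,κ)}, y(a+h·)⟩_{μ,κ} / ‖P_i^{(μ,κ)}‖²_{μ,κ}) · P_i^{(μ,κ)}(t). Then for every t ∈ (0,1], h^{−α} times the Riemann–Liouville fractional derivative of order α of D^{(0)} at t equals h^{−α} · ∫_0^1 Q_{μ,κ,α,N}(τ,t) · y(a+hτ) dτ, where Q_{μ,κ,α,N}(τ,t) = Σ_{i=0}^{N} w_{μ,κ}(τ) · (P_i^{(μ,κ)}(τ)/‖P_i^{(μ,κ)}‖²_{μ,κ}) · q_{μ,κ,i}(t), and q_{μ,κ,i}(t) = Σ_{j=0}^{i} Σ_{m=0}^{i−j} c_{μ,κ,i,j,m} · (Γ(i−m+1)/Γ(i−m+1−α)) · t^{i−m−α} with c_{μ,κ,i,j,m} = (−1)^m · C(i+μ, j) · C(i+κ,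 i−j) · C(i−j, m). -/
/-- The weight function `w_{μ,κ}(t) = (1−t)^μ t^κ` on `[0,1]`. -/
noncomputable def jacobiWeight (μ κ t : ℝ) : ℝ := (1 - t) ^ μ * t ^ κ

/-- The weighted scalar product `⟨f, g⟩_{μ,κ} = ∫_0^1 w_{μ,κ}(t) f(t) g(t) dt`. -/
noncomputable def scalarProd (μ κ : ℝ) (f g : ℝ → ℝ) : ℝ :=
  ∫ t in (0:ℝ)..1, jacobiWeight μ κ t * f t * g t

/-- The squared weighted L² norm `‖f‖²_{μ,κ} = ⟨f, f⟩_{μ,κ}`. -/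
noncomputable def normSq (μ κ : ℝ) (f : ℝ → ℝ) : ℝ := scalarProd μ κ f f

/-- `q_{μ,κ,i}(t)` from the fractional Jacobi differentiator. -/
noncomputable def qPoly (μ κ α : ℝ) (i : ℕ) (t : ℝ) : ℝ :=
  ∑ j ∈ Finset.range (i + 1), ∑ m ∈ Finset.range (i - j + 1),
    ((-1 : ℝ) ^ m * genBinom ((i : ℝ) + μ) j * genBinom ((i : ℝ) + κ) (i - j) *
        ((i - j).choose m : ℝ)) *
      (Real.Gamma ((i : ℝ) - (m : ℝ) + 1) / Real.Gamma ((i : ℝ) - (m : ℝ) + 1 - α)) *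
      t ^ ((i : ℝ) - (m : ℝ) - α)

/-- The kernel `Q_{μ,κ,α,N}(τ, t)`. -/
noncomputable def jacobiKernel (μ κ α : ℝ) (N : ℕ) (τ t : ℝ) : ℝ :=
  ∑ i ∈ Finset.range (N + 1),
    jacobiWeight μ κ τ * (jacobiP μ κ i τ / normSq μ κ (jacobiP μ κ i)) * qPoly μ κ α i t

/-- The real Beta integral on `[0,u]`. -/
lemma beta_aux (β : ℝ) (hβ : 0 < β) (k : ℕ) (u : ℝ) (hu : 0 < u) :
    ∫ τ in (0:ℝ)..u, (u - τ) ^ (β - 1) * τ ^ k =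
      Real.Gamma β * Real.Gamma ((k : ℝ) + 1) *
        (u ^ (β + k) * (Real.Gamma (β + k + 1))⁻¹) := by
  have hk : (0 : ℝ) < (k : ℝ) + 1 := by positivity
  have h1 := Complex.betaIntegral_scaled (((k : ℝ) + 1 : ℝ) : ℂ) ((β : ℝ) : ℂ) hu
  rw [Complex.betaIntegral_eq_Gamma_mul_div _ _ (by simpa using hk) (by simpa using hβ)] at h1
  have h2 : ∫ x in (0:ℝ)..u, (x : ℂ) ^ ((((k : ℝ) + 1 : ℝ) : ℂ) - 1) *
      ((u : ℂ) - x) ^ ((β : ℂ) - 1) =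
      ∫ x in (0:ℝ)..u, (((u - x) ^ (β - 1) * x ^ k : ℝ) : ℂ) := by
    apply intervalIntegral.integral_congr
    intro x hx
    rw [Set.uIcc_of_le hu.le] at hx
    simp only
    rw [Complex.ofReal_mul, Complex.ofReal_cpow (by linarith [hx.2])]
    push_cast
    rw [add_sub_cancel_right, Complex.cpow_natCast]
    ring
  rw [h2, intervalIntegral.integral_ofReal] at h1
  rw [← Complex.ofReal_add, Complex.Gamma_ofReal, Complex.Gamma_ofReal, Complex.Gamma_ofReal] at h1
  have h3 : (u : ℂ) ^ ((((k : ℝ) + 1 + β : ℝ) : ℂ) - 1) = ((u ^ (β + k) : ℝ) : ℂ) := by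
    rw [Complex.ofReal_cpow hu.le]
    congr 1
    push_cast
    ring
  rw [h3] at h1
  have h4 : ∫ τ in (0:ℝ)..u, (u - τ) ^ (β - 1) * τ ^ k =
      u ^ (β + k) * (Real.Gamma ((k : ℝ) + 1) * Real.Gamma β / Real.Gamma ((k : ℝ) + 1 + β)) := by
    exact_mod_cast h1
  rw [h4, show (k : ℝ) + 1 + β = β + k + 1 by ring]
  ring

lemma deriv_aux (s u : ℝ) (hu : 0 < u) :
    deriv (fun u : ℝ => u ^ s * (Real.Gamma (s + 1))⁻¹) u =
      u ^ (s - 1) * (Real.Gamma s)⁻¹ := by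
  have h := (Real.hasDerivAt_rpow_const (x := u) (p := s) (Or.inl hu.ne')).mul_const
    (Real.Gamma (s + 1))⁻¹
  rw [h.deriv]
  by_cases hs : s = 0
  · subst hs
    simp [Real.Gamma_zero]
  · rw [Real.Gamma_add_one hs, mul_inv]
    field_simp

lemma iter_aux (s : ℝ) (n : ℕ) : ∀ u : ℝ, 0 < u →
    iteratedDeriv n (fun u : ℝ => u ^ s * (Real.Gamma (s + 1))⁻¹) u =
      u ^ (s - n) * (Real.Gamma (s - n + 1))⁻¹ := by
  induction n with
  | zero => intro u _; simp
  | succ n ih =>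
    intro u hu
    rw [iteratedDeriv_succ]
    have he : iteratedDeriv n (fun u : ℝ => u ^ s * (Real.Gamma (s + 1))⁻¹) =ᶠ[nhds u]
        fun u : ℝ => u ^ (s - n) * (Real.Gamma (s - n + 1))⁻¹ := by
      filter_upwards [lt_mem_nhds hu] with v hv using ih v hv
    rw [he.deriv_eq, deriv_aux _ _ hu]
    push_cast
    rw [show s - n - 1 = s - (n + 1) by ring, show s - (n + 1) + 1 = s - n by ring]

lemma rl_aux {ι : Type} (S : Finset ι) (c : ι → ℝ) (k : ι → ℕ) (α : ℝ) (l : ℕ) (hα2 : α < l)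
    (t : ℝ) (ht : 0 < t) :
    rlDeriv α l (fun s => ∑ x ∈ S, c x * s ^ k x) t =
      ∑ x ∈ S, c x * (Real.Gamma ((k x : ℝ) + 1) / Real.Gamma ((k x : ℝ) + 1 - α)) *
        t ^ ((k x : ℝ) - α) := by
  have hβ : (0 : ℝ) < l - α := by linarith
  have hG := (Real.Gamma_pos_of_pos hβ).ne'
  unfold rlDeriv
  have he : (fun u : ℝ => ∫ τ in (0:ℝ)..u, (u - τ) ^ ((l : ℝ) - α - 1) * ∑ x ∈ S, c x * τ ^ k x)
      =ᶠ[nhds t] fun u : ℝ => ∑ x ∈ S, (c x * (Real.Gamma (l - α) * Real.Gamma ((k x : ℝ) + 1))) *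
        (u ^ ((l : ℝ) - α + k x) * (Real.Gamma ((l : ℝ) - α + k x + 1))⁻¹) := by
    filter_upwards [lt_mem_nhds ht] with u hu
    simp_rw [Finset.mul_sum]
    rw [intervalIntegral.integral_finset_sum]
    · refine Finset.sum_congr rfl fun x _ => ?_
      rw [mul_assoc, ← beta_aux _ hβ _ _ hu, ← intervalIntegral.integral_const_mul]
      congr 1
      ext τ
      ring
    · intro x _
      apply IntervalIntegrable.mul_continuousOn
      · have h := (intervalIntegral.intervalIntegrable_rpow' (a := 0) (b := u)
          (r := (l : ℝ) - α - 1) (by linarith)).comp_sub_left u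
        simpa using h.symm
      · fun_prop
  rw [he.iteratedDeriv_eq, iteratedDeriv_fun_sum, Finset.mul_sum]
  · refine Finset.sum_congr rfl fun x _ => ?_
    rw [iteratedDeriv_const_mul_field, iter_aux _ _ _ ht,
      show (l : ℝ) - α + k x - l = k x - α by ring,
      show (k x : ℝ) - α + 1 = k x + 1 - α by ring]
    field_simp
  · intro x _
    exact contDiffAt_const.mul
      ((Real.contDiffAt_rpow_const_of_ne ht.ne').mul contDiffAt_const)

lemma jacobi_expand (μ κ : ℝ) (i : ℕ) (s : ℝ) :
    jacobiP μ κ i s = ∑ j ∈ Finset.range (i + 1), ∑ m ∈ Finset.range (i - j + 1),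
      ((-1 : ℝ) ^ m * genBinom ((i : ℝ) + μ) j * genBinom ((i : ℝ) + κ) (i - j) *
        ((i - j).choose m : ℝ)) * s ^ (i - m) := by
  unfold jacobiP
  refine Finset.sum_congr rfl fun j hj => ?_
  rw [sub_eq_neg_add, add_pow, Finset.mul_sum, Finset.sum_mul]
  refine Finset.sum_congr rfl fun m hm => ?_
  rw [Finset.mem_range] at hj hm
  rw [show i - m = (i - j - m) + j by omega, pow_add]
  ring

lemma rl_sum (μ κ α : ℝ) (l N : ℕ) (hα2 : α < l) (C : ℕ → ℝ) (t : ℝ) (ht : 0 < t) :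
    rlDeriv α l (fun s => ∑ i ∈ Finset.range (N + 1), C i * jacobiP μ κ i s) t =
      ∑ i ∈ Finset.range (N + 1), C i * qPoly μ κ α i t := by
  have h := rl_aux ((Finset.range (N + 1)).sigma fun i =>
      (Finset.range (i + 1)).sigma fun j => Finset.range (i - j + 1))
    (fun x => C x.1 * ((-1 : ℝ) ^ x.2.2 * genBinom ((x.1 : ℝ) + μ) x.2.1 *
      genBinom ((x.1 : ℝ) + κ) (x.1 - x.2.1) * ((x.1 - x.2.1).choose x.2.2 : ℝ)))
    (fun x => x.1 - x.2.2) α l hα2 t ht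
  simp only [Finset.sum_sigma] at h
  simp only [jacobi_expand, qPoly, Finset.mul_sum, ← mul_assoc] at h ⊢
  rw [h]
  refine Finset.sum_congr rfl fun i _ => Finset.sum_congr rfl fun j _ =>
    Finset.sum_congr rfl fun m hm => ?_
  rw [Finset.mem_range] at hm
  rw [Nat.cast_sub (by omega)]

lemma weight_integrable (μ κ : ℝ) (hμ : -1 < μ) (hκ : -1 < κ) :
    IntervalIntegrable (jacobiWeight μ κ) MeasureTheory.volume 0 1 := by
  have h := Complex.betaIntegral_convergent (u := ((κ + 1 : ℝ) : ℂ)) (v := ((μ + 1 : ℝ) : ℂ))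
    (by simp; linarith) (by simp; linarith)
  rw [intervalIntegrable_iff_integrableOn_Ioc_of_le zero_le_one] at h ⊢
  refine (MeasureTheory.IntegrableOn.congr_fun h.re (fun x hx => ?_) measurableSet_Ioc)
  have e : (x : ℂ) ^ (((κ + 1 : ℝ) : ℂ) - 1) * (1 - (x : ℂ)) ^ (((μ + 1 : ℝ) : ℂ) - 1) =
      ((jacobiWeight μ κ x : ℝ) : ℂ) := by
    unfold jacobiWeight
    rw [Complex.ofReal_mul, Complex.ofReal_cpow hx.1.le, Complex.ofReal_cpow (by linarith [hx.2])]
    push_cast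
    rw [add_sub_cancel_right, add_sub_cancel_right]
    ring
  simp only [e]
  simp

lemma jacobi_continuous (μ κ : ℝ) (i : ℕ) : Continuous (jacobiP μ κ i) := by
  unfold jacobiP
  fun_prop

theorem stmt8 (a b : ℝ) (hab : a < b) (h : ℝ) (hh : h = b - a)
    (y : ℝ → ℝ) (hy : ContinuousOn y (Set.Icc a b))
    (N : ℕ) (μ κ : ℝ) (hμ : -1 < μ) (hκ : -1 < κ)
    (α : ℝ) (hα : 0 ≤ α) (l : ℕ) (hl : 1 ≤ l) (hα1 : (l : ℝ) - 1 ≤ α) (hα2 : α < l)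
    (t : ℝ) (ht : t ∈ Set.Ioc (0:ℝ) 1) :
    h ^ (-α) *
      rlDeriv α l
        (fun s => ∑ i ∈ Finset.range (N + 1),
          (scalarProd μ κ (jacobiP μ κ i) (fun τ => y (a + h * τ)) /
              normSq μ κ (jacobiP μ κ i)) * jacobiP μ κ i s) t =
    h ^ (-α) * ∫ τ in (0:ℝ)..1, jacobiKernel μ κ α N τ t * y (a + h * τ) := by
  rw [rl_sum μ κ α l N hα2 _ t ht.1]
  congr 1
  have hyc : ContinuousOn (fun τ => y (a + h * τ)) (Set.uIcc 0 1) := by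
    refine hy.comp (by fun_prop) fun τ hτ => ?_
    rw [Set.uIcc_of_le zero_le_one] at hτ
    subst hh
    constructor <;> nlinarith [hτ.1, hτ.2]
  unfold jacobiKernel
  simp_rw [Finset.sum_mul]
  rw [intervalIntegral.integral_finset_sum]
  · refine Finset.sum_congr rfl fun i _ => ?_
    rw [div_mul_eq_mul_div, mul_div_assoc, scalarProd, ← intervalIntegral.integral_mul_const]
    congr 1
    ext τ
    ring
  · intro i _
    refine IntervalIntegrable.mul_continuousOn ?_ hyc
    refine IntervalIntegrable.mul_const ?_ _
    exact (weight_integrable μ κ hμ hκ).mul_continuousOn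
      ((jacobi_continuous μ κ i).div_const _).continuousOn
end
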